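/- arXiv:1606.09141 — 5 statements merged into one kernel-verified Lean document; each statement's English description precedes it below -/
import Mathlib

section
/- Let n ≥ 1. On the open subset of ℝ^{2n} = ℝⁿ × ℝⁿ (coordinates (X,Y)) where U(X,Y) = ‖X‖² − ‖Y‖² ≠ 0, the CH-function F(X,Y) = (1/2)·arctan(V/U), with V(X,Y) = 2⟨X,Y⟩, is infinity-harmonic: Δ_∞F = 0 at every such point. -/
/-!
Wherever `∇F` is differentiable, `Δ_∞F` is the derivative of `‖∇F‖² / 2` in the direction `∇F`.

The quadratic forms `U(z) = ⟪S z, z⟫` and `V(z) = ⟪T z, z⟫` come from the involutions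
`S (X, Y) = (X, -Y)` and `T (X, Y) = (Y, X)`, and only the Clifford relations between them matter:
`S` and `T` are self-adjoint, square to `1` and anticommute. They make `S z` and `T z` orthogonal of
norm `‖z‖`, so with `Q = U² + V²` the gradient `∇F = (U • T z - V • S z) / Q` satisfies
`‖∇F‖² = ‖z‖² / Q`. Finally `∇F` is orthogonal to `z`, the direction of `∇‖z‖²`, and to
`U • S z + V • T z`, the direction of `∇Q`; hence `‖∇F‖²` is stationary along `∇F`.
-/

noncomputable section

variable {ι : Type*} [Fintype ι] [DecidableEq ι]

/-- The `i`-th partial derivative `∂F/∂zᵢ` of `F : ℝ^ι → ℝ` at `x`. -/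
def pd (F : EuclideanSpace ℝ ι → ℝ) (x : EuclideanSpace ℝ ι) (i : ι) : ℝ :=
  fderiv ℝ F x (EuclideanSpace.single i 1)

/-- The Laplacian `ΔF = Σᵢ ∂²F/∂zᵢ²` at `x`. -/
def lap (F : EuclideanSpace ℝ ι → ℝ) (x : EuclideanSpace ℝ ι) : ℝ :=
  ∑ i, fderiv ℝ (fun y => pd F y i) x (EuclideanSpace.single i 1)

/-- The infinity-Laplacian `Δ_∞F = Σ_{i,j} (∂F/∂zᵢ)(∂F/∂zⱼ)(∂²F/∂zᵢ∂zⱼ)` at `x`. -/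
def infLap (F : EuclideanSpace ℝ ι → ℝ) (x : EuclideanSpace ℝ ι) : ℝ :=
  ∑ i, ∑ j, pd F x i * pd F x j * fderiv ℝ (fun y => pd F y i) x (EuclideanSpace.single j 1)

/-- The squared norm `‖∇F‖²` of the gradient of `F` at `x`. -/
def gradSq (F : EuclideanSpace ℝ ι → ℝ) (x : EuclideanSpace ℝ ι) : ℝ :=
  ∑ i, (pd F x i) ^ 2

/-- `U(X,Y) = ‖X‖² - ‖Y‖²` on `ℝ^{2n} = ℝⁿ × ℝⁿ`. -/
def Ufun (n : ℕ) (z : EuclideanSpace ℝ (Fin n ⊕ Fin n)) : ℝ :=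
  ∑ i : Fin n, (z (Sum.inl i)) ^ 2 - ∑ i : Fin n, (z (Sum.inr i)) ^ 2

/-- `V(X,Y) = 2⟨X,Y⟩` on `ℝ^{2n} = ℝⁿ × ℝⁿ`. -/
def Vfun (n : ℕ) (z : EuclideanSpace ℝ (Fin n ⊕ Fin n)) : ℝ :=
  2 * ∑ i : Fin n, z (Sum.inl i) * z (Sum.inr i)

/-- The CH-function `F(X,Y) = (1/2)·arctan(V/U)`. -/
def CHfun (n : ℕ) (z : EuclideanSpace ℝ (Fin n ⊕ Fin n)) : ℝ :=
  (1 / 2) * Real.arctan (Vfun n z / Ufun n z)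

open scoped Gradient RealInnerProductSpace Topology

lemma pd_eq_gradient_apply (F : EuclideanSpace ℝ ι → ℝ) (x : EuclideanSpace ℝ ι) (i : ι) :
    pd F x i = ∇ F x i := by
  rw [pd, ← inner_gradient_left, EuclideanSpace.inner_single_right]
  simp

lemma infLap_eq_inner_fderiv_gradient {F : EuclideanSpace ℝ ι → ℝ} {x : EuclideanSpace ℝ ι}
    (hF : DifferentiableAt ℝ (∇ F) x) :
    infLap F x = ⟪∇ F x, fderiv ℝ (∇ F) x (∇ F x)⟫ := by
  have fderiv_pd (i : ι) (v : EuclideanSpace ℝ ι) :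
      fderiv ℝ (fun y => pd F y i) x v = fderiv ℝ (∇ F) x v i := by
    simp only [pd_eq_gradient_apply]
    exact DFunLike.congr_fun
      ((EuclideanSpace.proj (𝕜 := ℝ) i).hasFDerivAt.comp x hF.hasFDerivAt).fderiv v
  have gradient_eq_sum : ∇ F x = ∑ j, ∇ F x j • EuclideanSpace.single j (1 : ℝ) := by
    simpa using ((EuclideanSpace.basisFun ι ℝ).sum_repr (∇ F x)).symm
  have fderiv_gradient_apply (i : ι) : fderiv ℝ (∇ F) x (∇ F x) i =
      ∑ j, ∇ F x j * fderiv ℝ (∇ F) x (EuclideanSpace.single j 1) i := by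
    conv_lhs => rw [gradient_eq_sum]
    simp
  simp only [infLap, fderiv_pd]
  simp only [pd_eq_gradient_apply, PiLp.inner_apply, fderiv_gradient_apply, RCLike.inner_apply,
    conj_trivial, Finset.sum_mul]
  exact Finset.sum_congr rfl fun i _ => Finset.sum_congr rfl fun j _ => by ring

lemma infLap_eq_half_fderiv_norm_gradient_sq {F : EuclideanSpace ℝ ι → ℝ}
    {x : EuclideanSpace ℝ ι} (hF : DifferentiableAt ℝ (∇ F) x) :
    infLap F x = 1 / 2 * fderiv ℝ (fun y => ‖∇ F y‖ ^ 2) x (∇ F x) := by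
  rw [infLap_eq_inner_fderiv_gradient hF, hF.hasFDerivAt.norm_sq.fderiv]
  simp

/-- Two self-adjoint elements of a star ring that square to `1` and anticommute, i.e. the relations
satisfied by two orthonormal generators of a Clifford algebra. -/
structure IsCliffordPair {A : Type*} [Ring A] [StarRing A] (s t : A) : Prop where
  isSelfAdjoint_left : IsSelfAdjoint s
  isSelfAdjoint_right : IsSelfAdjoint t
  mul_self_left : s * s = 1
  mul_self_right : t * t = 1
  anticomm : s * t = -(t * s)

lemma IsCliffordPair.symm {A : Type*} [Ring A] [StarRing A] {s t : A} (h : IsCliffordPair s t) :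
    IsCliffordPair t s where
  isSelfAdjoint_left := h.isSelfAdjoint_right
  isSelfAdjoint_right := h.isSelfAdjoint_left
  mul_self_left := h.mul_self_right
  mul_self_right := h.mul_self_left
  anticomm := by rw [h.anticomm, neg_neg]

lemma IsCliffordPair.map {A B G : Type*} [Ring A] [StarRing A] [Ring B] [StarRing B]
    [FunLike G A B] [RingHomClass G A B] [StarHomClass G A B] {s t : A}
    (h : IsCliffordPair s t) (f : G) : IsCliffordPair (f s) (f t) where
  isSelfAdjoint_left := h.isSelfAdjoint_left.map f
  isSelfAdjoint_right := h.isSelfAdjoint_right.map f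
  mul_self_left := by rw [← map_mul, h.mul_self_left, map_one]
  mul_self_right := by rw [← map_mul, h.mul_self_right, map_one]
  anticomm := by rw [← map_mul, h.anticomm, map_neg, map_mul]

lemma hasFDerivAt_fun_div {𝕜 E : Type*} [NontriviallyNormedField 𝕜] [NormedAddCommGroup E]
    [NormedSpace 𝕜 E] {f g : E → 𝕜} {f' g' : E →L[𝕜] 𝕜} {x : E} (hf : HasFDerivAt f f' x)
    (hg : HasFDerivAt g g' x) (hx : g x ≠ 0) :
    HasFDerivAt (fun y => f y / g y) ((g x ^ 2)⁻¹ • (g x • f' - f x • g')) x := by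
  simp only [div_eq_mul_inv]
  refine (hf.fun_mul ((hasDerivAt_inv hx).comp_hasFDerivAt x hg)).congr_fderiv ?_
  ext v
  simp only [Function.comp_apply, add_apply, sub_apply, smul_apply, smul_eq_mul]
  field_simp
  ring

section HalfPhase

variable {E : Type*} [NormedAddCommGroup E] [InnerProductSpace ℝ E]

/-- Half the argument of the complex number `⟪S x, x⟫ + i ⟪T x, x⟫`. It is given by the arctangent
of the slope, so it is the argument only up to a locally constant summand, and has the junk value
`0` where `⟪S x, x⟫ = 0`. -/
def halfPhase (S T : E →L[ℝ] E) (x : E) : ℝ :=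
  1 / 2 * Real.arctan (⟪T x, x⟫ / ⟪S x, x⟫)

/-- The squared modulus of the complex number `⟪S x, x⟫ + i ⟪T x, x⟫`. -/
def phaseNormSq (S T : E →L[ℝ] E) (x : E) : ℝ :=
  ⟪S x, x⟫ ^ 2 + ⟪T x, x⟫ ^ 2

/-- The gradient of `halfPhase S T` at a point where `⟪S x, x⟫ ≠ 0`, for self-adjoint `S` and `T`;
see `hasGradientAt_halfPhase`. -/
def phaseGradient (S T : E →L[ℝ] E) (x : E) : E :=
  (phaseNormSq S T x)⁻¹ • (⟪S x, x⟫ • T x - ⟪T x, x⟫ • S x)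

variable {S T : E →L[ℝ] E} {x : E}

lemma phaseNormSq_ne_zero (hx : ⟪S x, x⟫ ≠ 0) : phaseNormSq S T x ≠ 0 := by
  unfold phaseNormSq
  positivity

lemma differentiableAt_phaseGradient (hx : ⟪S x, x⟫ ≠ 0) :
    DifferentiableAt ℝ (phaseGradient S T) x := by
  have hQ : ⟪S x, x⟫ ^ 2 + ⟪T x, x⟫ ^ 2 ≠ 0 := phaseNormSq_ne_zero hx
  have inner_apply_self (R : E →L[ℝ] E) : DifferentiableAt ℝ (fun y => ⟪R y, y⟫) x :=
    R.differentiableAt.inner ℝ differentiableAt_id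
  unfold phaseGradient phaseNormSq
  fun_prop (disch := exact hQ)

/-- The Euler relation for `halfPhase S T`, which is homogeneous of degree zero. -/
lemma inner_self_phaseGradient : ⟪x, phaseGradient S T x⟫ = 0 := by
  simp only [phaseGradient, inner_smul_right, inner_sub_right, real_inner_comm x]
  ring

variable [CompleteSpace E]

lemma hasFDerivAt_inner_apply_self (hS : IsSelfAdjoint S) (x : E) :
    HasFDerivAt (fun y => ⟪S y, y⟫) (2 • innerSL ℝ (S x)) x :=
  hS.isSymmetric.hasStrictFDerivAt_reApplyInnerSelf x |>.hasFDerivAt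

lemma hasFDerivAt_phaseNormSq (hS : IsSelfAdjoint S) (hT : IsSelfAdjoint T) (x : E) :
    HasFDerivAt (phaseNormSq S T) (4 • innerSL ℝ (⟪S x, x⟫ • S x + ⟪T x, x⟫ • T x)) x := by
  refine (((hasFDerivAt_inner_apply_self hS x).pow 2).add
    ((hasFDerivAt_inner_apply_self hT x).pow 2)).congr_fderiv ?_
  ext v
  simp only [Nat.add_one_sub_one, pow_one, nsmul_eq_mul, Nat.cast_ofNat, add_apply, smul_apply,
    coe_innerSL_apply, smul_eq_mul, map_add, map_smul]
  ring

lemma hasGradientAt_halfPhase (hS : IsSelfAdjoint S) (hT : IsSelfAdjoint T)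
    (hx : ⟪S x, x⟫ ≠ 0) : HasGradientAt (halfPhase S T) (phaseGradient S T x) x := by
  have hQ : ⟪S x, x⟫ ^ 2 + ⟪T x, x⟫ ^ 2 ≠ 0 := phaseNormSq_ne_zero hx
  refine ((hasFDerivAt_fun_div (hasFDerivAt_inner_apply_self hT x)
    (hasFDerivAt_inner_apply_self hS x) hx).arctan.const_mul (1 / 2)).congr_fderiv ?_
  ext v
  simp only [phaseGradient, phaseNormSq, smul_apply, sub_apply, coe_innerSL_apply, nsmul_eq_mul,
    Nat.cast_ofNat, smul_eq_mul, map_smul, map_sub, InnerProductSpace.toDual_apply_apply]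
  field_simp

lemma gradient_halfPhase_eventuallyEq (hS : IsSelfAdjoint S) (hT : IsSelfAdjoint T)
    (hx : ⟪S x, x⟫ ≠ 0) : ∇ (halfPhase S T) =ᶠ[𝓝 x] phaseGradient S T := by
  have hU : ∀ᶠ y in 𝓝 x, ⟪S y, y⟫ ≠ 0 :=
    (hasFDerivAt_inner_apply_self hS x).continuousAt.eventually_ne hx
  exact hU.mono fun y hy => (hasGradientAt_halfPhase hS hT hy).gradient

end HalfPhase

namespace IsCliffordPair

variable {E : Type*} [NormedAddCommGroup E] [InnerProductSpace ℝ E] [CompleteSpace E]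
  {S T : E →L[ℝ] E}

lemma norm_left (h : IsCliffordPair S T) (x : E) : ‖S x‖ = ‖x‖ := by
  have star_mul_self : star S * S = 1 := by rw [h.isSelfAdjoint_left.star_eq, h.mul_self_left]
  have mul_star_self : S * star S = 1 := by rw [h.isSelfAdjoint_left.star_eq, h.mul_self_left]
  exact S.norm_map_of_mem_unitary ⟨star_mul_self, mul_star_self⟩ x

lemma norm_right (h : IsCliffordPair S T) (x : E) : ‖T x‖ = ‖x‖ :=
  h.symm.norm_left x

lemma inner_left_right (h : IsCliffordPair S T) (x : E) : ⟪S x, T x⟫ = 0 := by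
  have neg_self : ⟪S x, T x⟫ = -⟪S x, T x⟫ :=
    calc
      ⟪S x, T x⟫ = ⟪x, (S * T) x⟫ := h.isSelfAdjoint_left.isSymmetric x (T x)
      _ = -⟪x, T (S x)⟫ := by rw [h.anticomm]; exact inner_neg_right _ _
      _ = -⟪T x, S x⟫ := neg_inj.2 (h.isSelfAdjoint_right.isSymmetric x (S x)).symm
      _ = -⟪S x, T x⟫ := by rw [real_inner_comm]
  linarith

lemma norm_phaseGradient_sq (h : IsCliffordPair S T) (x : E) :
    ‖phaseGradient S T x‖ ^ 2 = ‖x‖ ^ 2 / phaseNormSq S T x := by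
  have pythagoras :
      ‖⟪S x, x⟫ • T x - ⟪T x, x⟫ • S x‖ ^ 2 = phaseNormSq S T x * ‖x‖ ^ 2 := by
    rw [norm_sub_sq_real, real_inner_smul_left, real_inner_smul_right,
      real_inner_comm (S x) (T x), h.inner_left_right, norm_smul, norm_smul, h.norm_left,
      h.norm_right, mul_pow, mul_pow, Real.norm_eq_abs, Real.norm_eq_abs, sq_abs, sq_abs,
      phaseNormSq]
    ring
  rw [phaseGradient, norm_smul, mul_pow, pythagoras, Real.norm_eq_abs, sq_abs]
  field_simp

lemma inner_smul_add_smul_phaseGradient (h : IsCliffordPair S T) (x : E) :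
    ⟪⟪S x, x⟫ • S x + ⟪T x, x⟫ • T x, phaseGradient S T x⟫ = 0 := by
  simp only [phaseGradient, inner_smul_right, inner_sub_right, inner_add_left,
    real_inner_smul_left, real_inner_comm (S x) (T x), h.inner_left_right,
    real_inner_self_eq_norm_sq, h.norm_left, h.norm_right]
  ring

lemma fderiv_norm_phaseGradient_sq (h : IsCliffordPair S T) {x : E} (hx : ⟪S x, x⟫ ≠ 0) :
    fderiv ℝ (fun y => ‖phaseGradient S T y‖ ^ 2) x (phaseGradient S T x) = 0 := by
  simp only [h.norm_phaseGradient_sq]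
  rw [(hasFDerivAt_fun_div (hasStrictFDerivAt_norm_sq x).hasFDerivAt (hasFDerivAt_phaseNormSq
    h.isSelfAdjoint_left h.isSelfAdjoint_right x) (phaseNormSq_ne_zero hx)).fderiv]
  simp [inner_self_phaseGradient, -map_add, h.inner_smul_add_smul_phaseGradient]

end IsCliffordPair

theorem CH_infinity_harmonic_general {S T : EuclideanSpace ℝ ι →L[ℝ] EuclideanSpace ℝ ι}
    (h : IsCliffordPair S T) {z : EuclideanSpace ℝ ι} (hz : ⟪S z, z⟫ ≠ 0) :
    infLap (halfPhase S T) z = 0 := by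
  have hgrad : ∇ (halfPhase S T) =ᶠ[𝓝 z] phaseGradient S T :=
    gradient_halfPhase_eventuallyEq h.isSelfAdjoint_left h.isSelfAdjoint_right hz
  have hdiff : DifferentiableAt ℝ (∇ (halfPhase S T)) z :=
    (differentiableAt_phaseGradient hz).congr_of_eventuallyEq hgrad
  have hnorm : (fun y => ‖∇ (halfPhase S T) y‖ ^ 2) =ᶠ[𝓝 z] fun y => ‖phaseGradient S T y‖ ^ 2 :=
    hgrad.fun_comp (‖·‖ ^ 2)
  rw [infLap_eq_half_fderiv_norm_gradient_sq hdiff, hnorm.fderiv_eq, hgrad.eq_of_nhds,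
    h.fderiv_norm_phaseGradient_sq hz, mul_zero]

variable (ι) in
/-- The matrix of the reflection `(X, Y) ↦ (X, -Y)`, whose quadratic form is `U`. -/
def conjMatrix : Matrix (ι ⊕ ι) (ι ⊕ ι) ℝ :=
  Matrix.fromBlocks 1 0 0 (-1)

variable (ι) in
/-- The matrix of the reflection `(X, Y) ↦ (Y, X)`, whose quadratic form is `V`. -/
def swapMatrix : Matrix (ι ⊕ ι) (ι ⊕ ι) ℝ :=
  Matrix.fromBlocks 0 1 1 0

lemma isCliffordPair_conjMatrix_swapMatrix : IsCliffordPair (conjMatrix ι) (swapMatrix ι) where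
  isSelfAdjoint_left := Matrix.IsHermitian.fromBlocks (by simp) (by simp) (by simp)
  isSelfAdjoint_right := Matrix.IsHermitian.fromBlocks (by simp) (by simp) (by simp)
  mul_self_left := by simp [conjMatrix, Matrix.fromBlocks_multiply]
  mul_self_right := by simp [swapMatrix, Matrix.fromBlocks_multiply]
  anticomm := by simp [conjMatrix, swapMatrix, Matrix.fromBlocks_multiply, Matrix.fromBlocks_neg]

lemma Ufun_eq_inner (n : ℕ) (z : EuclideanSpace ℝ (Fin n ⊕ Fin n)) :
    Ufun n z = ⟪Matrix.toEuclideanCLM (𝕜 := ℝ) (conjMatrix (Fin n)) z, z⟫ := by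
  rw [real_inner_comm, Matrix.inner_toEuclideanCLM]
  simp [Ufun, conjMatrix, Matrix.fromBlocks_mulVec, Matrix.neg_mulVec, dotProduct, sq,
    sub_eq_add_neg]

lemma Vfun_eq_inner (n : ℕ) (z : EuclideanSpace ℝ (Fin n ⊕ Fin n)) :
    Vfun n z = ⟪Matrix.toEuclideanCLM (𝕜 := ℝ) (swapMatrix (Fin n)) z, z⟫ := by
  rw [real_inner_comm, Matrix.inner_toEuclideanCLM]
  simp [Vfun, swapMatrix, Matrix.fromBlocks_mulVec, dotProduct, two_mul, mul_comm]

lemma CHfun_eq_halfPhase (n : ℕ) :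
    CHfun n = halfPhase (Matrix.toEuclideanCLM (𝕜 := ℝ) (conjMatrix (Fin n)))
      (Matrix.toEuclideanCLM (𝕜 := ℝ) (swapMatrix (Fin n))) := by
  funext z
  rw [CHfun, halfPhase, Ufun_eq_inner, Vfun_eq_inner]

/-- the CH-function is infinity-harmonic where `U ≠ 0`. -/
theorem CH_infinity_harmonic (n : ℕ) (hn : 1 ≤ n)
    (z : EuclideanSpace ℝ (Fin n ⊕ Fin n)) (hz : Ufun n z ≠ 0) :
    infLap (CHfun n) z = 0 := by
  rw [CHfun_eq_halfPhase]
  exact CH_infinity_harmonic_general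
    (isCliffordPair_conjMatrix_swapMatrix.map (Matrix.toEuclideanCLM (n := Fin n ⊕ Fin n) (𝕜 := ℝ)))
    (Ufun_eq_inner n z ▸ hz)
end
end

section
/- Let n ≥ 1. On the open subset of ℝ^{2n} = ℝⁿ × ℝⁿ where U(X,Y) = ‖X‖² − ‖Y‖² ≠ 0, the CH-function F(X,Y) = (1/2)·arctan(V/U), with V(X,Y) = 2⟨X,Y⟩, is harmonic: ΔF = 0 at every such point. -/
/-!
With `wₖ = xₖ + i yₖ` one has `U + iV = Σₖ wₖ²`, and `arctan (V/U)` is `arg (a (U + iV))` for every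
real `a` of the same sign as `U`. Fixing such an `a`, `F` is near the given point the imaginary part
of the holomorphic function `log (a Σₖ wₖ²) / 2` of `w`. Such an imaginary part is harmonic: the
second derivative `D²h` of a holomorphic `h` is complex bilinear, so
`D²h(iu, iu) + D²h(u, u) = 0`, and the directions `xₖ`, `yₖ` of `ℝ^{2n}` correspond to `u = eₖ` and
`iu`.
-/

noncomputable section

variable {ι : Type*} [Fintype ι] [DecidableEq ι]

open Complex Filter Topology

lemma arctan_im_div_re_eq_arg {a : ℝ} {w : ℂ} (haw : 0 < a * w.re) :
    Real.arctan (w.im / w.re) = arg (a * w) := by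
  have harg : |arg (a * w)| < Real.pi / 2 := abs_arg_lt_pi_div_two_iff.2 <| .inl <| by simpa
  have htan : Real.tan (arg (a * w)) = w.im / w.re := by
    rw [tan_arg, re_ofReal_mul, im_ofReal_mul, mul_div_mul_left _ _ (left_ne_zero_of_mul haw.ne')]
  rw [← htan, Real.arctan_tan (abs_lt.1 harg).1 (abs_lt.1 harg).2]

section ImaginaryPart

variable {E W : Type*} [NormedAddCommGroup E] [NormedSpace ℝ E] [NormedAddCommGroup W]
  [NormedSpace ℂ W] {h : W → ℂ}

lemma fderiv_im_comp (T : E →L[ℝ] W) {x : E} (hh : DifferentiableAt ℂ h (T x)) (u : E) :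
    fderiv ℝ (fun y => (h (T y)).im) x u = (fderiv ℂ h (T x) (T u)).im := by
  have hhT : HasFDerivAt (fun y => h (T y)) _ x :=
    (hh.hasFDerivAt.restrictScalars ℝ).comp x T.hasFDerivAt
  have him : HasFDerivAt (fun y => (h (T y)).im) _ x := imCLM.hasFDerivAt.comp x hhT
  rw [him.fderiv]
  rfl

lemma fderiv_fderiv_im_comp (T : E →L[ℝ] W) {x : E} (hh : ContDiffAt ℂ 2 h (T x)) (u v : E) :
    fderiv ℝ (fun y => fderiv ℝ (fun y' => (h (T y')).im) y u) x v =
      (fderiv ℂ (fderiv ℂ h) (T x) (T v) (T u)).im := by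
  have hdiff : ∀ᶠ y in 𝓝 x, DifferentiableAt ℂ h (T y) :=
    T.continuous.continuousAt.eventually <|
      (hh.eventually (by simp)).mono fun _ hw => hw.differentiableAt (by simp)
  have hfst : (fun y => fderiv ℝ (fun y' => (h (T y')).im) y u) =ᶠ[𝓝 x]
      fun y => (fderiv ℂ h (T y) (T u)).im :=
    hdiff.mono fun _ hy => fderiv_im_comp T hy u
  have hsnd : DifferentiableAt ℂ (fderiv ℂ h) (T x) :=
    (hh.fderiv_right (m := 1) (by norm_num)).differentiableAt (by simp)
  rw [hfst.fderiv_eq,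
    fderiv_im_comp (h := fun w => fderiv ℂ h w (T u)) T (hsnd.clm_apply (by fun_prop)) v,
    fderiv_clm_apply hsnd (by fun_prop)]
  simp

lemma fderiv_fderiv_im_comp_add_eq_zero (T : E →L[ℝ] W) {x : E} (hh : ContDiffAt ℂ 2 h (T x))
    {u v : E} (huv : T v = I • T u) :
    fderiv ℝ (fun y => fderiv ℝ (fun y' => (h (T y')).im) y u) x u +
      fderiv ℝ (fun y => fderiv ℝ (fun y' => (h (T y')).im) y v) x v = 0 := by
  rw [fderiv_fderiv_im_comp T hh, fderiv_fderiv_im_comp T hh, huv]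
  simp [← mul_assoc]

end ImaginaryPart

lemma lap_congr {F G : EuclideanSpace ℝ ι → ℝ} {x : EuclideanSpace ℝ ι} (hFG : F =ᶠ[𝓝 x] G) :
    lap F x = lap G x := by
  refine Finset.sum_congr rfl fun i _ => ?_
  have hpd : (fun y => pd F y i) =ᶠ[𝓝 x] fun y => pd G y i :=
    hFG.fderiv.fun_comp fun L => L (EuclideanSpace.single i 1)
  rw [hpd.fderiv_eq]

lemma lap_const_mul (c : ℝ) (F : EuclideanSpace ℝ ι → ℝ) (x : EuclideanSpace ℝ ι) :
    lap (fun y => c * F y) x = c * lap F x := by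
  have hfderiv (G : EuclideanSpace ℝ ι → ℝ) (y v : EuclideanSpace ℝ ι) :
      fderiv ℝ (fun y' => c * G y') y v = c * fderiv ℝ G y v :=
    congr($(fderiv_const_smul_field (f := G) c) y v)
  simp only [lap, pd, hfderiv, Finset.mul_sum]

section Complexify

variable {κ : Type*}

/-- The identification of `ℝ^κ × ℝ^κ` with `ℂ^κ` sending `(X, Y)` to `X + iY`. -/
def complexify : EuclideanSpace ℝ (κ ⊕ κ) →L[ℝ] (κ → ℂ) :=
  .pi fun k => ofRealCLM ∘L EuclideanSpace.proj (Sum.inl k) +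
    I • (ofRealCLM ∘L EuclideanSpace.proj (Sum.inr k))

lemma complexify_apply (z : EuclideanSpace ℝ (κ ⊕ κ)) (k : κ) :
    complexify z k = z (Sum.inl k) + I * z (Sum.inr k) :=
  rfl

lemma complexify_single_inr [DecidableEq κ] (k : κ) :
    complexify (EuclideanSpace.single (Sum.inr k) 1) =
      I • complexify (EuclideanSpace.single (Sum.inl k) (1 : ℝ)) := by
  ext j
  by_cases hjk : j = k <;> simp [complexify_apply, hjk]

variable [Fintype κ] [DecidableEq κ]

lemma lap_im_comp_complexify_eq_zero {h : (κ → ℂ) → ℂ} {z : EuclideanSpace ℝ (κ ⊕ κ)}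
    (hh : ContDiffAt ℂ 2 h (complexify z)) :
    lap (fun y => (h (complexify y)).im) z = 0 := by
  rw [lap, Fintype.sum_sum_type, ← Finset.sum_add_distrib]
  exact Finset.sum_eq_zero fun k _ =>
    fderiv_fderiv_im_comp_add_eq_zero (h := h) complexify hh (complexify_single_inr k)

lemma lap_arctan_im_div_re_comp_complexify_eq_zero {S : (κ → ℂ) → ℂ}
    {z : EuclideanSpace ℝ (κ ⊕ κ)} (hS : ContDiffAt ℂ 2 S (complexify z))
    (hre : (S (complexify z)).re ≠ 0) :
    lap (fun y => Real.arctan ((S (complexify y)).im / (S (complexify y)).re)) z = 0 := by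
  let a : ℝ := (S (complexify z)).re
  have hpos : 0 < a * (S (complexify z)).re := mul_self_pos.2 hre
  have hcont : ContinuousAt (fun y => a * (S (complexify y)).re) z :=
    continuousAt_const.mul <| continuous_re.continuousAt.comp <|
      hS.continuousAt.comp complexify.continuous.continuousAt
  have hlog : (fun y => Real.arctan ((S (complexify y)).im / (S (complexify y)).re)) =ᶠ[𝓝 z]
      fun y => (log (a * S (complexify y))).im :=
    (hcont.eventually_const_lt hpos).mono fun y hy => by
      simp only [log_im, arctan_im_div_re_eq_arg hy]
  have hslit : a * S (complexify z) ∈ slitPlane := .inl <| by simpa using hpos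
  have hholo : ContDiffAt ℂ 2 (fun w => log (a * S w)) (complexify z) :=
    ContDiffAt.comp (g := log) (complexify z) (contDiffAt_log hslit) (contDiffAt_const.mul hS)
  rw [lap_congr hlog, lap_im_comp_complexify_eq_zero hholo]

end Complexify

lemma re_sum_complexify_sq (n : ℕ) (z : EuclideanSpace ℝ (Fin n ⊕ Fin n)) :
    (∑ k, complexify z k ^ 2).re = Ufun n z := by
  simp [Ufun, complexify_apply, sq]

lemma im_sum_complexify_sq (n : ℕ) (z : EuclideanSpace ℝ (Fin n ⊕ Fin n)) :
    (∑ k, complexify z k ^ 2).im = Vfun n z := by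
  simp [Vfun, complexify_apply, sq, Finset.mul_sum, two_mul, mul_comm]

/-- the CH-function is harmonic where `U ≠ 0`. -/
theorem CH_harmonic (n : ℕ) (hn : 1 ≤ n)
    (z : EuclideanSpace ℝ (Fin n ⊕ Fin n)) (hz : Ufun n z ≠ 0) :
    lap (CHfun n) z = 0 := by
  have hCH : CHfun n = fun y => 1 / 2 * Real.arctan
      ((∑ k, complexify y k ^ 2).im / (∑ k, complexify y k ^ 2).re) := by
    simp only [re_sum_complexify_sq, im_sum_complexify_sq]
    rfl
  rw [← re_sum_complexify_sq] at hz
  rw [hCH, lap_const_mul, lap_arctan_im_div_re_comp_complexify_eq_zero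
    (S := fun w => ∑ k, w k ^ 2) (by fun_prop) hz, mul_zero]
end
end

section
/- Let n ≥ 1. On the open subset of ℝ^{2n} = ℝⁿ × ℝⁿ where U(X,Y) = ‖X‖² − ‖Y‖² ≠ 0, the CH-function F(X,Y) = (1/2)·arctan(V/U), with V(X,Y) = 2⟨X,Y⟩, satisfies the minimal hypersurface equation: (1 + ‖∇F‖²)·ΔF − Δ_∞F = 0 at every such point; equivalently, div(∇F/√(1+‖∇F‖²)) = 0, so the (multi-valued) graph of F is a minimal hypersurface in ℝ^{2n+1}. -/
/-!
The quadratic forms `U` and `V` are the real and imaginary parts of `Σⱼ (Xⱼ + i Yⱼ)²`. They are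
harmonic, and their gradients are orthogonal of equal length, so the polar angle `arctan (V / U)`
is harmonic as well: its gradient is `(U ∇V - V ∇U) / (U² + V²)`, which is orthogonal to
`∇(U² + V²)`. For a multiple `F` of the angle, `‖∇F‖²` is proportional to `‖∇U‖² / (U² + V²)`; since
`‖∇U‖² = 4‖z‖²` and, by Euler's identity, `⟨z, ∇U⟩ = 2U` and `⟨z, ∇V⟩ = 2V`, this is constant along
`∇F`, and hence `Δ_∞F = ½⟨∇F, ∇‖∇F‖²⟩ = 0`. The divergence form of the equation follows from
`div(∇F/√(1+‖∇F‖²)) = ((1+‖∇F‖²) ΔF - Δ_∞F) / (1+‖∇F‖²)^{3/2}`.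
-/

noncomputable section

variable {ι : Type*} [Fintype ι] [DecidableEq ι]

open scoped Gradient RealInnerProductSpace Topology

section Calculus

variable {E : Type*} [NormedAddCommGroup E] [NormedSpace ℝ E] {κ : Type*} [Finite κ]

lemma hasFDerivAt_div {f g : E → ℝ} {f' g' : E →L[ℝ] ℝ} {x : E}
    (hf : HasFDerivAt f f' x) (hg : HasFDerivAt g g' x) (hx : g x ≠ 0) :
    HasFDerivAt (fun y => f y / g y) ((g x ^ 2)⁻¹ • (g x • f' - f x • g')) x := by
  have hinv : HasFDerivAt (fun y => (g y)⁻¹) (-(g x ^ 2)⁻¹ • g') x :=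
    (hasDerivAt_inv hx).comp_hasFDerivAt x hg
  simp only [div_eq_mul_inv]
  refine (hf.mul hinv).congr_fderiv ?_
  ext v
  simp only [add_apply, sub_apply, smul_apply, smul_eq_mul]
  field_simp
  ring

lemma fderiv_coord_apply {N : E → EuclideanSpace ℝ κ} {x : E} (hN : DifferentiableAt ℝ N x)
    (v : E) (i : κ) : fderiv ℝ (fun y => N y i) x v = fderiv ℝ N x v i := by
  have := Fintype.ofFinite κ
  exact DFunLike.congr_fun
    ((EuclideanSpace.proj (𝕜 := ℝ) i).hasFDerivAt.comp x hN.hasFDerivAt).fderiv v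

lemma fderiv_const_mul_coord_apply (a : ℝ) (i : κ) (x v : EuclideanSpace ℝ κ) :
    fderiv ℝ (fun y : EuclideanSpace ℝ κ => a * y i) x v = a * v i := by
  have := Fintype.ofFinite κ
  exact DFunLike.congr_fun
    ((EuclideanSpace.proj (𝕜 := ℝ) i).hasFDerivAt.const_mul a).fderiv v

lemma contDiffAt_const_mul_arctan_div {U V : E → ℝ} {x : E} (c : ℝ)
    (hU : ContDiffAt ℝ 2 U x) (hV : ContDiffAt ℝ 2 V x) (hx : U x ≠ 0) :
    ContDiffAt ℝ 2 (fun y => c * Real.arctan (V y / U y)) x :=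
  contDiffAt_const.mul (hV.div hU hx).arctan

end Calculus

section HorizontallyConformal

variable {E : Type*} [NormedAddCommGroup E] [InnerProductSpace ℝ E] [CompleteSpace E]
  {f U V : E → ℝ} {x : E}

lemma differentiableAt_gradient (hf : ContDiffAt ℝ 2 f x) : DifferentiableAt ℝ (∇ f) x :=
  (InnerProductSpace.toDual ℝ E).symm.toContinuousLinearEquiv.differentiableAt.comp x
    ((hf.fderiv_right (m := 1) (by norm_num)).differentiableAt (by norm_num))

/-- Horizontal conformality of the map `(U, V) : E → ℝ²` at `x`: the gradients of its two
components are orthogonal and have the same length there. -/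
structure IsHorizontallyConformalAt (U V : E → ℝ) (x : E) : Prop where
  norm_gradient_eq : ‖∇ U x‖ = ‖∇ V x‖
  inner_gradient_eq_zero : ⟪∇ U x, ∇ V x⟫ = 0

/-- The vector field `U ∇V - V ∇U`: the gradient of the polar angle of the point `(U, V)` of the
plane, multiplied by `U² + V²`. -/
def angularField (U V : E → ℝ) (x : E) : E :=
  U x • ∇ V x - V x • ∇ U x

lemma gradient_const_mul_arctan_div (c : ℝ) (hU : DifferentiableAt ℝ U x)
    (hV : DifferentiableAt ℝ V x) (hx : U x ≠ 0) :
    ∇ (fun y => c * Real.arctan (V y / U y)) x =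
      (c / (U x ^ 2 + V x ^ 2)) • angularField U V x := by
  have hF := ((hasFDerivAt_div hV.hasFDerivAt hU.hasFDerivAt hx).arctan.const_mul c).fderiv
  refine ext_inner_right ℝ fun v => ?_
  simp only [inner_gradient_left, hF, sub_apply, smul_apply, smul_eq_mul, angularField,
    inner_smul_left, inner_sub_left, RCLike.conj_to_real]
  have hD : U x ^ 2 + V x ^ 2 ≠ 0 := by positivity
  field_simp

lemma eventually_gradient_const_mul_arctan_div (c : ℝ) (hU : ContDiffAt ℝ 2 U x)
    (hV : ContDiffAt ℝ 2 V x) (hx : U x ≠ 0) :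
    ∇ (fun y => c * Real.arctan (V y / U y)) =ᶠ[𝓝 x]
      fun y => (c / (U y ^ 2 + V y ^ 2)) • angularField U V y := by
  filter_upwards [hU.eventually (by simp), hV.eventually (by simp),
    hU.continuousAt.eventually_ne hx] with y hUy hVy hy
  exact gradient_const_mul_arctan_div c (hUy.differentiableAt two_ne_zero)
    (hVy.differentiableAt two_ne_zero) hy

namespace IsHorizontallyConformalAt

lemma norm_sq_angularField (h : IsHorizontallyConformalAt U V x) :
    ‖angularField U V x‖ ^ 2 = (U x ^ 2 + V x ^ 2) * ‖∇ U x‖ ^ 2 := by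
  rw [angularField, norm_sub_sq_real, real_inner_smul_left, real_inner_smul_right,
    real_inner_comm, h.inner_gradient_eq_zero, norm_smul, norm_smul, ← h.norm_gradient_eq,
    mul_pow, mul_pow, Real.norm_eq_abs, Real.norm_eq_abs, sq_abs, sq_abs]
  ring

lemma fderiv_sq_add_sq_angularField (h : IsHorizontallyConformalAt U V x)
    (hU : DifferentiableAt ℝ U x) (hV : DifferentiableAt ℝ V x) :
    fderiv ℝ (fun y => U y ^ 2 + V y ^ 2) x (angularField U V x) = 0 := by
  have hD : HasFDerivAt (fun y => U y ^ 2 + V y ^ 2) _ x :=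
    (hU.hasFDerivAt.pow 2).add (hV.hasFDerivAt.pow 2)
  have horth : ⟪∇ V x, ∇ U x⟫ = 0 := by rw [real_inner_comm, h.inner_gradient_eq_zero]
  simp only [hD.fderiv, add_apply, smul_apply, smul_eq_mul, ← inner_gradient_left, angularField,
    inner_sub_right, real_inner_smul_right, h.inner_gradient_eq_zero, horth,
    real_inner_self_eq_norm_sq, h.norm_gradient_eq]
  ring

lemma fderiv_div_sq_add_sq_angularField (h : IsHorizontallyConformalAt U V x)
    (hU : DifferentiableAt ℝ U x) (hV : DifferentiableAt ℝ V x) (hx : U x ≠ 0)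
    (hf : DifferentiableAt ℝ f x) :
    fderiv ℝ (fun y => f y / (U y ^ 2 + V y ^ 2)) x (angularField U V x) =
      fderiv ℝ f x (angularField U V x) / (U x ^ 2 + V x ^ 2) := by
  have hD : DifferentiableAt ℝ (fun y => U y ^ 2 + V y ^ 2) x := (hU.pow 2).add (hV.pow 2)
  have hDx : U x ^ 2 + V x ^ 2 ≠ 0 := by positivity
  rw [(hasFDerivAt_div hf.hasFDerivAt hD.hasFDerivAt hDx).fderiv]
  simp only [sub_apply, smul_apply, smul_eq_mul, h.fderiv_sq_add_sq_angularField hU hV]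
  field_simp
  ring

end IsHorizontallyConformalAt

end HorizontallyConformal

section VectorCalculus

variable {F f : EuclideanSpace ℝ ι → ℝ} {M N : EuclideanSpace ℝ ι → EuclideanSpace ℝ ι}
  {x : EuclideanSpace ℝ ι}

lemma sum_mul_map_single (L : EuclideanSpace ℝ ι →L[ℝ] ℝ) (v : EuclideanSpace ℝ ι) :
    ∑ i, v i * L (EuclideanSpace.single i 1) = L v := by
  conv_rhs => rw [← (EuclideanSpace.basisFun ι ℝ).sum_repr v]
  simp

lemma gradient_apply (F : EuclideanSpace ℝ ι → ℝ) (x : EuclideanSpace ℝ ι) (i : ι) :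
    ∇ F x i = pd F x i := by
  rw [pd, ← inner_gradient_left, EuclideanSpace.inner_single_right]
  simp

lemma gradSq_eq_norm_sq (F : EuclideanSpace ℝ ι → ℝ) (x : EuclideanSpace ℝ ι) :
    gradSq F x = ‖∇ F x‖ ^ 2 := by
  simp only [gradSq, EuclideanSpace.real_norm_sq_eq, gradient_apply]

lemma hasFDerivAt_gradSq (hF : DifferentiableAt ℝ (∇ F) x) :
    HasFDerivAt (gradSq F) (2 • (innerSL ℝ (∇ F x)).comp (fderiv ℝ (∇ F) x)) x := by
  simpa only [← gradSq_eq_norm_sq] using hF.hasFDerivAt.norm_sq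

lemma infLap_eq_inner (hF : DifferentiableAt ℝ (∇ F) x) :
    infLap F x = ⟪∇ F x, fderiv ℝ (∇ F) x (∇ F x)⟫ := by
  simp only [infLap, ← gradient_apply, mul_assoc, ← Finset.mul_sum, sum_mul_map_single]
  simp only [fderiv_coord_apply hF, PiLp.inner_apply, RCLike.inner_apply, RCLike.conj_to_real,
    mul_comm]

lemma infLap_eq_half_fderiv_gradSq (hF : DifferentiableAt ℝ (∇ F) x) :
    infLap F x = fderiv ℝ (gradSq F) x (∇ F x) / 2 := by
  rw [infLap_eq_inner hF, (hasFDerivAt_gradSq hF).fderiv]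
  simp

/-- The divergence `Σᵢ ∂Nᵢ/∂zᵢ` of a vector field on `ℝ^ι`. -/
def divergence (N : EuclideanSpace ℝ ι → EuclideanSpace ℝ ι) (x : EuclideanSpace ℝ ι) : ℝ :=
  ∑ i, fderiv ℝ (fun y => N y i) x (EuclideanSpace.single i 1)

lemma divergence_congr (h : M =ᶠ[𝓝 x] N) : divergence M x = divergence N x :=
  Finset.sum_congr rfl fun i _ =>
    DFunLike.congr_fun (Filter.EventuallyEq.fderiv_eq (h.fun_comp (· i))) _

lemma divergence_gradient (F : EuclideanSpace ℝ ι → ℝ) (x : EuclideanSpace ℝ ι) :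
    divergence (∇ F) x = lap F x := by
  simp only [divergence, lap, gradient_apply]

lemma divergence_eq_sum_fderiv_apply (hN : DifferentiableAt ℝ N x) :
    divergence N x = ∑ i, fderiv ℝ N x (EuclideanSpace.single i 1) i := by
  simp only [divergence, fderiv_coord_apply hN]

lemma divergence_smul (hf : DifferentiableAt ℝ f x) (hN : DifferentiableAt ℝ N x) :
    divergence (fun y => f y • N y) x = f x * divergence N x + fderiv ℝ f x (N x) := by
  rw [divergence_eq_sum_fderiv_apply (hf.fun_smul hN), divergence_eq_sum_fderiv_apply hN,
    fderiv_fun_smul hf hN, ← sum_mul_map_single (fderiv ℝ f x), Finset.mul_sum,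
    ← Finset.sum_add_distrib]
  simp [mul_comm]

lemma divergence_sub (hM : DifferentiableAt ℝ M x) (hN : DifferentiableAt ℝ N x) :
    divergence (fun y => M y - N y) x = divergence M x - divergence N x := by
  rw [divergence_eq_sum_fderiv_apply (hM.fun_sub hN), divergence_eq_sum_fderiv_apply hM,
    divergence_eq_sum_fderiv_apply hN, fderiv_fun_sub hM hN, ← Finset.sum_sub_distrib]
  rfl

lemma divergence_normalized_gradient (hF : DifferentiableAt ℝ (∇ F) x) :
    divergence (fun y => (√(1 + gradSq F y))⁻¹ • ∇ F y) x =
      ((1 + gradSq F x) * lap F x - infLap F x) / √(1 + gradSq F x) ^ 3 := by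
  have hpos : 0 < 1 + gradSq F x := by rw [gradSq_eq_norm_sq]; positivity
  have hsqrt : √(1 + gradSq F x) ≠ 0 := (Real.sqrt_pos.2 hpos).ne'
  have hsq : √(1 + gradSq F x) ^ 2 = 1 + gradSq F x := Real.sq_sqrt hpos.le
  have hinv : HasFDerivAt (fun y => (√(1 + gradSq F y))⁻¹) _ x :=
    (hasDerivAt_inv hsqrt).comp_hasFDerivAt x
      (((hasFDerivAt_gradSq hF).differentiableAt.hasFDerivAt.const_add 1).sqrt hpos.ne')
  rw [divergence_smul hinv.differentiableAt hF, divergence_gradient, hinv.fderiv,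
    infLap_eq_half_fderiv_gradSq hF]
  simp only [smul_apply, smul_eq_mul]
  field_simp
  rw [hsq]
  ring

end VectorCalculus

section PolarAngle

variable {U V : EuclideanSpace ℝ ι → ℝ} {x : EuclideanSpace ℝ ι}

lemma divergence_angularField (hU : ContDiffAt ℝ 2 U x) (hV : ContDiffAt ℝ 2 V x) :
    divergence (angularField U V) x = U x * lap V x - V x * lap U x := by
  have hU' := hU.differentiableAt two_ne_zero
  have hV' := hV.differentiableAt two_ne_zero
  have hgU := differentiableAt_gradient hU
  have hgV := differentiableAt_gradient hV
  unfold angularField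
  rw [divergence_sub (hU'.fun_smul hgV) (hV'.fun_smul hgU), divergence_smul hU' hgV,
    divergence_smul hV' hgU, divergence_gradient, divergence_gradient, ← inner_gradient_left,
    ← inner_gradient_left, real_inner_comm]
  ring

lemma IsHorizontallyConformalAt.lap_const_mul_arctan_div (h : IsHorizontallyConformalAt U V x)
    (c : ℝ) (hU : ContDiffAt ℝ 2 U x) (hV : ContDiffAt ℝ 2 V x) (hx : U x ≠ 0) :
    lap (fun y => c * Real.arctan (V y / U y)) x =
      c / (U x ^ 2 + V x ^ 2) * (U x * lap V x - V x * lap U x) := by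
  have hU' := hU.differentiableAt two_ne_zero
  have hV' := hV.differentiableAt two_ne_zero
  have hW : DifferentiableAt ℝ (angularField U V) x :=
    (hU'.fun_smul (differentiableAt_gradient hV)).fun_sub
      (hV'.fun_smul (differentiableAt_gradient hU))
  have hD : DifferentiableAt ℝ (fun y => U y ^ 2 + V y ^ 2) x := (hU'.pow 2).add (hV'.pow 2)
  have hfactor : DifferentiableAt ℝ (fun y => c / (U y ^ 2 + V y ^ 2)) x :=
    (hasFDerivAt_div (hasFDerivAt_const c x) hD.hasFDerivAt (by positivity)).differentiableAt
  rw [← divergence_gradient,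
    divergence_congr (eventually_gradient_const_mul_arctan_div c hU hV hx),
    divergence_smul hfactor hW, divergence_angularField hU hV,
    h.fderiv_div_sq_add_sq_angularField hU' hV' hx (differentiableAt_const c)]
  simp

lemma IsHorizontallyConformalAt.gradSq_const_mul_arctan_div
    (h : IsHorizontallyConformalAt U V x) (c : ℝ) (hU : DifferentiableAt ℝ U x)
    (hV : DifferentiableAt ℝ V x) (hx : U x ≠ 0) :
    gradSq (fun y => c * Real.arctan (V y / U y)) x =
      c ^ 2 * gradSq U x / (U x ^ 2 + V x ^ 2) := by
  have hD : U x ^ 2 + V x ^ 2 ≠ 0 := by positivity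
  rw [gradSq_eq_norm_sq, gradient_const_mul_arctan_div c hU hV hx, norm_smul, mul_pow,
    h.norm_sq_angularField, ← gradSq_eq_norm_sq, Real.norm_eq_abs, sq_abs]
  field_simp

lemma infLap_const_mul_arctan_div (h : ∀ᶠ y in 𝓝 x, IsHorizontallyConformalAt U V y) (c : ℝ)
    (hU : ContDiffAt ℝ 2 U x) (hV : ContDiffAt ℝ 2 V x) (hx : U x ≠ 0) :
    infLap (fun y => c * Real.arctan (V y / U y)) x =
      c ^ 3 / (2 * (U x ^ 2 + V x ^ 2) ^ 2) * fderiv ℝ (gradSq U) x (angularField U V x) := by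
  have hU' := hU.differentiableAt two_ne_zero
  have hV' := hV.differentiableAt two_ne_zero
  have hgradSq : gradSq (fun y => c * Real.arctan (V y / U y)) =ᶠ[𝓝 x]
      fun y => c ^ 2 * gradSq U y / (U y ^ 2 + V y ^ 2) := by
    filter_upwards [h, hU.eventually (by simp), hV.eventually (by simp),
      hU.continuousAt.eventually_ne hx] with y hy hUy hVy hne
    exact hy.gradSq_const_mul_arctan_div c (hUy.differentiableAt two_ne_zero)
      (hVy.differentiableAt two_ne_zero) hne
  have hgU : DifferentiableAt ℝ (gradSq U) x :=
    (hasFDerivAt_gradSq (differentiableAt_gradient hU)).differentiableAt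
  rw [infLap_eq_half_fderiv_gradSq
      (differentiableAt_gradient (contDiffAt_const_mul_arctan_div c hU hV hx)),
    hgradSq.fderiv_eq, gradient_const_mul_arctan_div c hU' hV' hx, map_smul,
    h.self_of_nhds.fderiv_div_sq_add_sq_angularField hU' hV' hx (hgU.const_mul _),
    fderiv_const_mul hgU, smul_apply, smul_eq_mul, smul_eq_mul]
  field_simp

end PolarAngle

section CHFunction

variable {n : ℕ} (z : EuclideanSpace ℝ (Fin n ⊕ Fin n))

lemma contDiff_Ufun : ContDiff ℝ 2 (Ufun n) := by
  unfold Ufun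
  fun_prop

lemma contDiff_Vfun : ContDiff ℝ 2 (Vfun n) := by
  unfold Vfun
  fun_prop

lemma pd_Ufun (j : Fin n ⊕ Fin n) :
    pd (Ufun n) z j = Sum.elim (fun i => 2 * z (Sum.inl i)) (fun i => -2 * z (Sum.inr i)) j := by
  have hcoord (k : Fin n ⊕ Fin n) := (EuclideanSpace.proj (𝕜 := ℝ) k).hasFDerivAt (x := z)
  have hU : HasFDerivAt (Ufun n) _ z :=
    (HasFDerivAt.fun_sum fun i _ => (hcoord (Sum.inl i)).pow 2).sub
      (HasFDerivAt.fun_sum fun i _ => (hcoord (Sum.inr i)).pow 2)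
  rw [pd, hU.fderiv]
  cases j <;> simp

lemma pd_Vfun (j : Fin n ⊕ Fin n) :
    pd (Vfun n) z j = Sum.elim (fun i => 2 * z (Sum.inr i)) (fun i => 2 * z (Sum.inl i)) j := by
  have hcoord (k : Fin n ⊕ Fin n) := (EuclideanSpace.proj (𝕜 := ℝ) k).hasFDerivAt (x := z)
  have hV : HasFDerivAt (Vfun n) _ z :=
    (HasFDerivAt.fun_sum fun i _ => (hcoord (Sum.inl i)).mul (hcoord (Sum.inr i))).const_mul 2
  rw [pd, hV.fderiv]
  cases j <;> simp

lemma gradSq_Ufun : gradSq (Ufun n) z = 4 * ‖z‖ ^ 2 := by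
  simp only [gradSq, pd_Ufun, EuclideanSpace.real_norm_sq_eq, Fintype.sum_sum_type, Sum.elim_inl,
    Sum.elim_inr, mul_pow, ← Finset.mul_sum]
  ring

lemma gradSq_Vfun : gradSq (Vfun n) z = 4 * ‖z‖ ^ 2 := by
  simp only [gradSq, pd_Vfun, EuclideanSpace.real_norm_sq_eq, Fintype.sum_sum_type, Sum.elim_inl,
    Sum.elim_inr, mul_pow, ← Finset.mul_sum]
  ring

lemma isHorizontallyConformalAt_Ufun_Vfun : IsHorizontallyConformalAt (Ufun n) (Vfun n) z where
  norm_gradient_eq := by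
    rw [← sq_eq_sq₀ (norm_nonneg _) (norm_nonneg _), ← gradSq_eq_norm_sq, ← gradSq_eq_norm_sq,
      gradSq_Ufun, gradSq_Vfun]
  inner_gradient_eq_zero := by
    simp only [PiLp.inner_apply, gradient_apply, pd_Ufun, pd_Vfun, Fintype.sum_sum_type,
      Sum.elim_inl, Sum.elim_inr, RCLike.inner_apply, RCLike.conj_to_real,
      ← Finset.sum_add_distrib]
    exact Finset.sum_eq_zero fun i _ => by ring

lemma lap_Ufun : lap (Ufun n) z = 0 := by
  simp only [lap, pd_Ufun, Fintype.sum_sum_type, Sum.elim_inl, Sum.elim_inr,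
    fderiv_const_mul_coord_apply]
  simp

lemma lap_Vfun : lap (Vfun n) z = 0 := by
  simp only [lap, pd_Vfun, Fintype.sum_sum_type, Sum.elim_inl, Sum.elim_inr,
    fderiv_const_mul_coord_apply]
  simp

lemma inner_gradient_Ufun_self : ⟪z, ∇ (Ufun n) z⟫ = 2 * Ufun n z := by
  simp only [PiLp.inner_apply, gradient_apply, pd_Ufun, Fintype.sum_sum_type, Sum.elim_inl,
    Sum.elim_inr, RCLike.inner_apply, RCLike.conj_to_real, Ufun, ← Finset.sum_add_distrib,
    ← Finset.sum_sub_distrib, Finset.mul_sum]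
  exact Finset.sum_congr rfl fun i _ => by ring

lemma inner_gradient_Vfun_self : ⟪z, ∇ (Vfun n) z⟫ = 2 * Vfun n z := by
  simp only [PiLp.inner_apply, gradient_apply, pd_Vfun, Fintype.sum_sum_type, Sum.elim_inl,
    Sum.elim_inr, RCLike.inner_apply, RCLike.conj_to_real, Vfun, Finset.mul_sum,
    ← Finset.sum_add_distrib]
  exact Finset.sum_congr rfl fun i _ => by ring

lemma fderiv_gradSq_Ufun_angularField :
    fderiv ℝ (gradSq (Ufun n)) z (angularField (Ufun n) (Vfun n) z) = 0 := by
  have hgradSq (v : EuclideanSpace ℝ (Fin n ⊕ Fin n)) :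
      fderiv ℝ (gradSq (Ufun n)) z v = 8 * ⟪z, v⟫ := by
    rw [funext gradSq_Ufun, ((hasStrictFDerivAt_norm_sq z).hasFDerivAt.const_mul 4).fderiv]
    simp only [smul_apply, coe_innerSL_apply, nsmul_eq_mul, Nat.cast_ofNat, smul_eq_mul]
    ring
  rw [hgradSq, angularField, inner_sub_right, real_inner_smul_right, real_inner_smul_right,
    inner_gradient_Ufun_self, inner_gradient_Vfun_self]
  ring

variable {z}

lemma contDiffAt_CHfun (hz : Ufun n z ≠ 0) : ContDiffAt ℝ 2 (CHfun n) z :=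
  contDiffAt_const_mul_arctan_div (1 / 2) contDiff_Ufun.contDiffAt contDiff_Vfun.contDiffAt hz

lemma lap_CHfun (hz : Ufun n z ≠ 0) : lap (CHfun n) z = 0 := by
  have hlap := (isHorizontallyConformalAt_Ufun_Vfun z).lap_const_mul_arctan_div (1 / 2)
    contDiff_Ufun.contDiffAt contDiff_Vfun.contDiffAt hz
  rwa [lap_Ufun, lap_Vfun, mul_zero, mul_zero, sub_zero, mul_zero] at hlap

lemma infLap_CHfun (hz : Ufun n z ≠ 0) : infLap (CHfun n) z = 0 := by
  have hinfLap := infLap_const_mul_arctan_div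
    (Filter.Eventually.of_forall isHorizontallyConformalAt_Ufun_Vfun) (1 / 2)
    contDiff_Ufun.contDiffAt contDiff_Vfun.contDiffAt hz
  rwa [fderiv_gradSq_Ufun_angularField, mul_zero] at hinfLap

end CHFunction

/-- the CH-function satisfies the minimal hypersurface equation
`(1 + ‖∇F‖²)·ΔF − Δ_∞F = 0` where `U ≠ 0`, equivalently `div(∇F/√(1+‖∇F‖²)) = 0`,
so its (multi-valued) graph is a minimal hypersurface in `ℝ^{2n+1}`. -/
theorem CH_minimal (n : ℕ) (hn : 1 ≤ n)
    (z : EuclideanSpace ℝ (Fin n ⊕ Fin n)) (hz : Ufun n z ≠ 0) :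
    (1 + gradSq (CHfun n) z) * lap (CHfun n) z - infLap (CHfun n) z = 0 ∧
    (∑ i, fderiv ℝ
        (fun y => pd (CHfun n) y i / Real.sqrt (1 + gradSq (CHfun n) y)) z
        (EuclideanSpace.single i 1)) = 0 := by
  have hminimal : (1 + gradSq (CHfun n) z) * lap (CHfun n) z - infLap (CHfun n) z = 0 := by
    rw [lap_CHfun hz, infLap_CHfun hz, mul_zero, sub_zero]
  refine ⟨hminimal, ?_⟩
  calc
    _ = divergence (fun y => (√(1 + gradSq (CHfun n) y))⁻¹ • ∇ (CHfun n) y) z := by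
      simp only [divergence, PiLp.smul_apply, gradient_apply, smul_eq_mul, div_eq_inv_mul]
    _ = ((1 + gradSq (CHfun n) z) * lap (CHfun n) z - infLap (CHfun n) z) /
        √(1 + gradSq (CHfun n) z) ^ 3 :=
      divergence_normalized_gradient (differentiableAt_gradient (contDiffAt_CHfun hz))
    _ = 0 := by rw [hminimal, zero_div]
end
end

section
/- Lawson's algebraic minimal cones in ℝ⁴: let N ≥ 1 be an integer, and let P_N(x₁,y₁,x₂,y₂) = Im((x₁ + i·y₁)^N · (x₂ − i·y₂)), a homogeneous polynomial of degree N+1. Then at every point of the cone {P_N = 0} where ∇P_N ≠ 0, one has ‖∇P_N‖²·ΔP_N − Δ_∞P_N = 0; hence {P_N = 0} is an algebraic minimal cone of degree N+1 in ℝ⁴. -/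
/-!
The imaginary part of a holomorphic function `F` on `ℂⁿ` is harmonic, and its gradient is
`i∇F`, where `∇F` has the coordinates `conj (∂ₖF)`. Hence
`Δ_∞ (Im F) = -Im ∑ₖₗ ∂ₖ∂ₗF · conj (∂ₖF) · conj (∂ₗF)`. If `F` is a monomial, then every summand
is a real multiple of `conj F`: a nonzero `∂ₖ∂ₗF` is an integer multiple of the monomial `G` with
`F = G wₖ wₗ`, while `∂ₖF` and `∂ₗF` are integer multiples of `G wₗ` and `G wₖ`. So `Δ_∞ (Im F)`
vanishes wherever `Im F` does. Lawson's cones are the case `F = w ^ N * u` in the unitary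
coordinates `w = x₁ + i·y₁`, `u = x₂ − i·y₂`.
-/

noncomputable section

variable {ι : Type*} [Fintype ι] [DecidableEq ι]

/-- `P_N(x₁,y₁,x₂,y₂) = Im((x₁ + i·y₁)^N · (x₂ − i·y₂))`, with coordinates
`(x₁,y₁,x₂,y₂) = (z 0, z 1, z 2, z 3)` on `ℝ⁴`. -/
def LawsonP (N : ℕ) (z : EuclideanSpace ℝ (Fin 4)) : ℝ :=
  ((((z 0 : ℂ) + (z 1 : ℂ) * Complex.I) ^ N) *
    ((z 2 : ℂ) - (z 3 : ℂ) * Complex.I)).im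

open MvPolynomial
open scoped ComplexConjugate Gradient

section HolomorphicFunctions

variable {V : Type*} [NormedAddCommGroup V] [InnerProductSpace ℂ V]

lemma sum_re_inner_map_single_smul (Z : EuclideanSpace ℝ ι ≃ₗᵢ[ℝ] V) (v : V) :
    ∑ i, (inner ℂ (Z (EuclideanSpace.single i 1)) v).re • Z (EuclideanSpace.single i 1) = v := by
  let _ : InnerProductSpace ℝ V := InnerProductSpace.complexToReal
  simpa [real_inner_eq_re_inner ℂ] using (OrthonormalBasis.ofRepr Z.symm).sum_repr' v

lemma sum_bilin_map_single_eq_zero {W : Type*} [NormedAddCommGroup W] [NormedSpace ℂ W]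
    (Z : EuclideanSpace ℝ ι ≃ₗᵢ[ℝ] V) (B : V →L[ℂ] V →L[ℂ] W) :
    ∑ i, B (Z (EuclideanSpace.single i 1)) (Z (EuclideanSpace.single i 1)) = 0 := by
  set e : ι → V := fun i => Z (EuclideanSpace.single i 1)
  have expand (v : V) : ∑ i, (inner ℂ (e i) v).re • e i = v := sum_re_inner_map_single_smul Z v
  have skew (i j : ι) : (inner ℂ (e j) (Complex.I • e i)).re
      = -(inner ℂ (e i) (Complex.I • e j)).re := by
    rw [inner_smul_right, inner_smul_right, ← inner_conj_symm (e i) (e j)]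
    simp [-inner_conj_symm]
  -- Multiplication by `i` is orthogonal, so it preserves the trace `∑ᵢ B(eᵢ, eᵢ)`, but it also
  -- changes the sign of that trace because `B` is complex bilinear.
  have : IsAddTorsionFree W := .of_isTorsionFree ℂ W
  refine self_eq_neg.mp ?_
  calc ∑ i, B (e i) (e i)
      = ∑ i, B (e i) (-Complex.I • (Complex.I • e i)) := by simp [smul_smul]
    _ = ∑ i, B (e i) (-Complex.I • ∑ j, (inner ℂ (e j) (Complex.I • e i)).re • e j) := by
      simp_rw [expand]
    _ = ∑ j, B (∑ i, (inner ℂ (e i) (Complex.I • e j)).re • e i) (Complex.I • e j) := by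
      simp only [Finset.smul_sum, map_sum, sum_apply]
      rw [Finset.sum_comm]
      refine Finset.sum_congr rfl fun j _ => Finset.sum_congr rfl fun i _ => ?_
      simp only [skew i j, ← Complex.coe_smul, map_smul, smul_apply, smul_smul]
      simp
    _ = -∑ j, B (e j) (e j) := by
      simp_rw [expand]
      simp [smul_smul]

lemma fderiv_im_comp_apply {E : Type*} [NormedAddCommGroup E] [NormedSpace ℝ E] {F : V → ℂ}
    (L : E →L[ℝ] V) {x : E} (hF : DifferentiableAt ℂ F (L x)) (v : E) :
    fderiv ℝ (fun y => (F (L y)).im) x v = (fderiv ℂ F (L x) (L v)).im := by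
  have h := Complex.imCLM.hasFDerivAt.comp x
    ((hF.hasFDerivAt.restrictScalars ℝ).comp x L.hasFDerivAt)
  exact DFunLike.congr_fun h.fderiv v

variable (Z : EuclideanSpace ℝ ι ≃ₗᵢ[ℝ] V) {F : V → ℂ}

lemma pd_im_comp {x : EuclideanSpace ℝ ι} (hF : DifferentiableAt ℂ F (Z x)) (i : ι) :
    pd (fun y => (F (Z y)).im) x i = (fderiv ℂ F (Z x) (Z (EuclideanSpace.single i 1))).im :=
  fderiv_im_comp_apply (Z : EuclideanSpace ℝ ι →L[ℝ] V) hF _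

lemma fderiv_pd_im_comp (hF : ContDiff ℂ 2 F) (x : EuclideanSpace ℝ ι) (i j : ι) :
    fderiv ℝ (fun y => pd (fun y => (F (Z y)).im) y i) x (EuclideanSpace.single j 1) =
      (fderiv ℂ (fderiv ℂ F) (Z x) (Z (EuclideanSpace.single j 1))
        (Z (EuclideanSpace.single i 1))).im := by
  have hF' : Differentiable ℂ (fderiv ℂ F) :=
    (hF.fderiv_right (m := 1) (by norm_num)).differentiable one_ne_zero
  simp_rw [pd_im_comp Z (hF.differentiable two_ne_zero _)]
  have h := fderiv_im_comp_apply (Z : EuclideanSpace ℝ ι →L[ℝ] V) (x := x)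
    ((hF' (Z x)).clm_apply (differentiableAt_const (Z (EuclideanSpace.single i 1))))
    (EuclideanSpace.single j 1)
  rw [fderiv_clm_apply (hF' _) (differentiableAt_const _)] at h
  simpa using h

lemma lap_im_comp_eq_zero (hF : ContDiff ℂ 2 F) (x : EuclideanSpace ℝ ι) :
    lap (fun y => (F (Z y)).im) x = 0 := by
  simp_rw [lap, fderiv_pd_im_comp Z hF, ← Complex.im_sum, sum_bilin_map_single_eq_zero,
    Complex.zero_im]

variable [CompleteSpace V]

lemma sum_pd_im_comp_smul {x : EuclideanSpace ℝ ι} (hF : DifferentiableAt ℂ F (Z x)) :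
    ∑ i, pd (fun y => (F (Z y)).im) x i • Z (EuclideanSpace.single i 1) =
      Complex.I • ∇ F (Z x) := by
  have pd_eq (i : ι) : pd (fun y => (F (Z y)).im) x i =
      (inner ℂ (Z (EuclideanSpace.single i 1)) (Complex.I • ∇ F (Z x))).re := by
    rw [pd_im_comp Z hF, ← inner_gradient_left, ← inner_conj_symm, inner_smul_right]
    simp
  simp_rw [pd_eq, sum_re_inner_map_single_smul]

lemma infLap_im_comp (hF : ContDiff ℂ 2 F) (x : EuclideanSpace ℝ ι) :
    infLap (fun y => (F (Z y)).im) x =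
      -(fderiv ℂ (fderiv ℂ F) (Z x) (∇ F (Z x)) (∇ F (Z x))).im := by
  set g : ι → ℝ := pd (fun y => (F (Z y)).im) x
  set e : ι → V := fun i => Z (EuclideanSpace.single i 1)
  set B := fderiv ℂ (fderiv ℂ F) (Z x)
  have hg : ∑ i, g i • e i = Complex.I • ∇ F (Z x) :=
    sum_pd_im_comp_smul Z (hF.differentiable two_ne_zero _)
  calc infLap (fun y => (F (Z y)).im) x
      = ∑ i, ∑ j, g i * g j * (B (e j) (e i)).im := by
        simp_rw [infLap, fderiv_pd_im_comp Z hF]; rfl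
    _ = (B (∑ j, g j • e j) (∑ i, g i • e i)).im := by
      simp [← Complex.coe_smul, Finset.mul_sum, mul_assoc]
    _ = -(B (∇ F (Z x)) (∇ F (Z x))).im := by
      rw [hg]
      simp [← mul_assoc]

end HolomorphicFunctions

section Polynomials

lemma hasFDerivAt_eval {𝕜 E κ : Type*} [NontriviallyNormedField 𝕜] [NormedAddCommGroup E]
    [NormedSpace 𝕜 E] [Fintype κ] {c : E → κ → 𝕜} {c' : κ → E →L[𝕜] 𝕜} {x : E}
    (hc : ∀ k, HasFDerivAt (fun y => c y k) (c' k) x) (p : MvPolynomial κ 𝕜) :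
    HasFDerivAt (fun y => eval (c y) p) (∑ k, eval (c x) (pderiv k p) • c' k) x := by
  classical
  induction p using MvPolynomial.induction_on with
  | C a => simpa using (hasFDerivAt_const a x).congr_fderiv (by ext; simp)
  | add p q hp hq =>
    simp only [map_add]
    refine (hp.fun_add hq).congr_fderiv ?_
    ext h
    simp [add_mul, Finset.sum_add_distrib]
  | mul_X p l hp =>
    simp only [map_mul, eval_X]
    refine (hp.mul (hc l)).congr_fderiv ?_
    ext h
    simp [pderiv_X, Pi.single_apply, apply_ite, add_mul, Finset.sum_add_distrib,
      Finset.mul_sum, mul_assoc]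

variable {𝕜 κ : Type*} [RCLike 𝕜] [Fintype κ]

lemma hasFDerivAt_euclidean_eval (p : MvPolynomial κ 𝕜) (v : EuclideanSpace 𝕜 κ) :
    HasFDerivAt (fun w : EuclideanSpace 𝕜 κ => eval w p)
      (∑ k, eval v (pderiv k p) • (EuclideanSpace.proj k : EuclideanSpace 𝕜 κ →L[𝕜] 𝕜)) v :=
  hasFDerivAt_eval (fun k => (EuclideanSpace.proj k : EuclideanSpace 𝕜 κ →L[𝕜] 𝕜).hasFDerivAt) p

lemma contDiff_euclidean_eval {n : WithTop ℕ∞} (p : MvPolynomial κ 𝕜) :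
    ContDiff 𝕜 n (fun w : EuclideanSpace 𝕜 κ => eval w p) :=
  (AnalyticOnNhd.eval_continuousLinearMap'
    (fun k => (EuclideanSpace.proj k : EuclideanSpace 𝕜 κ →L[𝕜] 𝕜)) p).contDiff

lemma gradient_euclidean_eval_apply (p : MvPolynomial κ 𝕜) (v : EuclideanSpace 𝕜 κ) (k : κ) :
    (∇ (fun w : EuclideanSpace 𝕜 κ => eval w p) v) k = conj (eval v (pderiv k p)) := by
  classical
  calc (∇ (fun w : EuclideanSpace 𝕜 κ => eval w p) v) k
      = inner 𝕜 (EuclideanSpace.single k 1) (∇ (fun w : EuclideanSpace 𝕜 κ => eval w p) v) := by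
        rw [EuclideanSpace.inner_single_left, map_one, one_mul]
    _ = conj (eval v (pderiv k p)) := by
        rw [inner_gradient_right, (hasFDerivAt_euclidean_eval p v).fderiv]
        simp

lemma fderiv_fderiv_euclidean_eval_apply (p : MvPolynomial κ 𝕜) (v h h' : EuclideanSpace 𝕜 κ) :
    fderiv 𝕜 (fderiv 𝕜 fun w : EuclideanSpace 𝕜 κ => eval w p) v h h' =
      ∑ k, ∑ l, eval v (pderiv l (pderiv k p)) * h l * h' k := by
  simp_rw [funext fun w => (hasFDerivAt_euclidean_eval p w).fderiv]
  rw [(HasFDerivAt.fun_sum fun k _ => (hasFDerivAt_euclidean_eval (pderiv k p) v).smul_const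
    (EuclideanSpace.proj k : EuclideanSpace 𝕜 κ →L[𝕜] 𝕜)).fderiv]
  simp [Finset.sum_mul]

lemma infLap_im_eval (Z : EuclideanSpace ℝ ι ≃ₗᵢ[ℝ] EuclideanSpace ℂ κ) (p : MvPolynomial κ ℂ)
    (x : EuclideanSpace ℝ ι) :
    infLap (fun y => (eval (Z y) p).im) x =
      -(∑ k, ∑ l, eval (Z x) (pderiv l (pderiv k p)) * conj (eval (Z x) (pderiv l p)) *
        conj (eval (Z x) (pderiv k p))).im := by
  simpa only [fderiv_fderiv_euclidean_eval_apply, gradient_euclidean_eval_apply]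
    using infLap_im_comp Z (contDiff_euclidean_eval p) x

end Polynomials

section Monomials

variable {κ : Type*}

lemma eval_monomial_add_single {R : Type*} [CommSemiring R] (v : κ → R) (d : κ →₀ ℕ) (k : κ)
    (b : R) : eval v (monomial (d + Finsupp.single k 1) b) = eval v (monomial d b) * v k := by
  rw [monomial_add_single, pow_one, map_mul, eval_X]

lemma eval_monomial_mul {R : Type*} [CommSemiring R] (v : κ → R) (d : κ →₀ ℕ) (b c : R) :
    eval v (monomial d (b * c)) = c * eval v (monomial d b) := by
  rw [mul_comm, ← C_mul_monomial, map_mul, eval_C]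

lemma eval_pderiv_pderiv_monomial_mul_conj_mul_conj (v : κ → ℂ) (a : κ →₀ ℕ) (b : ℂ) (k l : κ) :
    eval v (pderiv l (pderiv k (monomial a b))) * conj (eval v (pderiv l (monomial a b))) *
        conj (eval v (pderiv k (monomial a b))) =
      (a k ^ 2 * a l * (a - Finsupp.single k 1 : κ →₀ ℕ) l *
        Complex.normSq (eval v (monomial (a - Finsupp.single k 1 - Finsupp.single l 1) b)) : ℝ) *
        conj (eval v (monomial a b)) := by
  rcases eq_or_ne (a k) 0 with hk | hk
  · simp [hk]
  rcases eq_or_ne ((a - Finsupp.single k 1 : κ →₀ ℕ) l) 0 with hl | hl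
  · simp [hl]
  obtain ⟨d, hd⟩ : ∃ d, a - Finsupp.single k 1 = d + Finsupp.single l 1 :=
    ⟨_, (tsub_add_cancel_of_le (Finsupp.single_le_iff.mpr (Nat.one_le_iff_ne_zero.mpr hl))).symm⟩
  have ha : a = d + Finsupp.single l 1 + Finsupp.single k 1 := by
    rw [← hd, tsub_add_cancel_of_le (Finsupp.single_le_iff.mpr (Nat.one_le_iff_ne_zero.mpr hk))]
  have ha_l : a - Finsupp.single l 1 = d + Finsupp.single k 1 := by
    rw [ha, add_right_comm, add_tsub_cancel_right]
  have hF : eval v (monomial a b) = eval v (monomial d b) * v l * v k := by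
    rw [ha, eval_monomial_add_single, eval_monomial_add_single]
  simp only [pderiv_monomial, eval_monomial_mul, hF, hd, ha_l, add_tsub_cancel_right,
    eval_monomial_add_single, map_mul, map_natCast]
  push_cast
  rw [Complex.normSq_eq_conj_mul_self]
  ring

end Monomials

/-- The imaginary part of the monomial `b ∏ₖ wₖ ^ aₖ` in unitary coordinates `w = Z x` on `ℝ^ι`,
which are encoded as a real-linear isometry `Z` onto `ℂ^κ`. Lawson's polynomials have this form. -/
def imMonomial {κ : Type*} [Fintype κ] (Z : EuclideanSpace ℝ ι ≃ₗᵢ[ℝ] EuclideanSpace ℂ κ)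
    (a : κ →₀ ℕ) (b : ℂ) (x : EuclideanSpace ℝ ι) : ℝ :=
  (eval (Z x) (monomial a b)).im

section ImMonomial

variable {κ : Type*} [Fintype κ] (Z : EuclideanSpace ℝ ι ≃ₗᵢ[ℝ] EuclideanSpace ℂ κ)
  (a : κ →₀ ℕ) (b : ℂ)

lemma lap_imMonomial (x : EuclideanSpace ℝ ι) : lap (imMonomial Z a b) x = 0 :=
  lap_im_comp_eq_zero Z (contDiff_euclidean_eval (monomial a b)) x

lemma infLap_imMonomial (x : EuclideanSpace ℝ ι) :
    infLap (imMonomial Z a b) x =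
      (∑ k, ∑ l, a k ^ 2 * a l * (a - Finsupp.single k 1 : κ →₀ ℕ) l * Complex.normSq
        (eval (Z x) (monomial (a - Finsupp.single k 1 - Finsupp.single l 1) b))) *
          imMonomial Z a b x := by
  refine (infLap_im_eval Z (monomial a b) x).trans ?_
  simp_rw [eval_pderiv_pderiv_monomial_mul_conj_mul_conj, ← Finset.sum_mul, ← Complex.ofReal_sum]
  rw [Complex.im_ofReal_mul, Complex.conj_im, mul_neg, neg_neg, imMonomial]

theorem lawson_cone_R4_minimal_general {x : EuclideanSpace ℝ ι} (hx : imMonomial Z a b x = 0) :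
    gradSq (imMonomial Z a b) x * lap (imMonomial Z a b) x - infLap (imMonomial Z a b) x = 0 := by
  rw [lap_imMonomial, infLap_imMonomial, hx, mul_zero, mul_zero, sub_zero]

end ImMonomial

/-- The unitary coordinates `(w, u) = (x₁ + i·y₁, x₂ − i·y₂)` on `ℝ⁴`, in which Lawson's
polynomial is the imaginary part of the monomial `w ^ N * u`. -/
def lawsonCoord : EuclideanSpace ℝ (Fin 4) ≃ₗᵢ[ℝ] EuclideanSpace ℂ (Fin 2) where
  toFun z := !₂[(z 0 : ℂ) + (z 1 : ℂ) * Complex.I, (z 2 : ℂ) - (z 3 : ℂ) * Complex.I]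
  invFun v := !₂[(v 0).re, (v 0).im, (v 1).re, -(v 1).im]
  map_add' y z := by
    ext k
    fin_cases k <;> simp <;> ring
  map_smul' r z := by
    ext k
    fin_cases k <;> simp <;> ring
  left_inv z := by
    ext i
    fin_cases i <;> simp
  right_inv v := by
    ext k
    fin_cases k <;> apply Complex.ext <;> simp
  norm_map' z := by
    have norm_sq_w : ‖(z 0 : ℂ) + z 1 * Complex.I‖ ^ 2 = z 0 ^ 2 + z 1 ^ 2 := by
      rw [Complex.sq_norm, Complex.normSq_add_mul_I]
    have norm_sq_u : ‖(z 2 : ℂ) - z 3 * Complex.I‖ ^ 2 = z 2 ^ 2 + z 3 ^ 2 := by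
      simpa [← sub_eq_add_neg, Complex.sq_norm] using Complex.normSq_add_mul_I (z 2) (-z 3)
    simp [EuclideanSpace.norm_eq, Fin.sum_univ_four, norm_sq_w, norm_sq_u, add_assoc]

lemma LawsonP_eq_imMonomial (N : ℕ) :
    LawsonP N = imMonomial lawsonCoord (Finsupp.single 0 N + Finsupp.single 1 1) 1 := by
  ext z
  simp [LawsonP, imMonomial, lawsonCoord, eval_monomial]

/-- Lawson's algebraic minimal cones of degree `N+1` in `ℝ⁴`: at every point
of `{P_N = 0}` with `∇P_N ≠ 0`, one has `‖∇P_N‖²·ΔP_N − Δ_∞P_N = 0`, so `{P_N = 0}` is an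
algebraic minimal cone of degree `N+1`. -/
theorem lawson_cone_R4_minimal (N : ℕ) (hN : 1 ≤ N) (z : EuclideanSpace ℝ (Fin 4))
    (hz : LawsonP N z = 0) (hgrad : ∃ i, pd (LawsonP N) z i ≠ 0) :
    gradSq (LawsonP N) z * lap (LawsonP N) z - infLap (LawsonP N) z = 0 := by
  rw [LawsonP_eq_imMonomial] at hz ⊢
  exact lawson_cone_R4_minimal_general _ _ _ hz
end
end

section
/- Lawson's minimal cubic cone: the cubic polynomial P(x₁,y₁,x₂,y₂) = y₂·(x₁² − y₁²) − x₂·(2x₁y₁) on ℝ⁴ satisfies ‖∇P‖²·ΔP − Δ_∞P = 0 at every point of its zero set {P = 0} where ∇P ≠ 0; hence {y₂(x₁² − y₁²) − x₂(2x₁y₁) = 0} is a minimal cubic cone in ℝ⁴. -/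
/-!
For a polynomial `p`, the derivation `D q = ⟨∇p, ∇q⟩` satisfies `D p = ‖∇p‖²` and
`D (D p) = 2 Δ_∞ p`. Lawson's cubic `P` is harmonic, and it is homogeneous of degree `2` in
`(x₁, y₁)` and of degree `1` in `(x₂, y₂)`. With `r = x₁² + y₁²` and `s = x₂² + y₂²`, Euler's
identity in each pair of variables therefore gives `D r = 4 P` and `D s = 2 P`. Since moreover
`‖∇P‖² = r (r + 4 s)`, the Leibniz rule yields `Δ_∞ P = 8 (r + s) P`, and so both terms of
`‖∇P‖² ΔP - Δ_∞ P` vanish on `{P = 0}`.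
-/

noncomputable section

variable {ι : Type*} [Fintype ι] [DecidableEq ι]

open MvPolynomial

section GradDerivation

variable {R σ : Type*} [CommSemiring R] [Fintype σ]

/-- The derivative `q ↦ ⟨∇p, ∇q⟩` along the gradient field of the polynomial `p`. -/
def gradDerivation (p : MvPolynomial σ R) : Derivation R (MvPolynomial σ R) (MvPolynomial σ R) :=
  ∑ i, pderiv i p • pderiv i

lemma gradDerivation_apply (p q : MvPolynomial σ R) :
    gradDerivation p q = ∑ i, pderiv i p * pderiv i q := by
  rw [gradDerivation, ← Derivation.coeFnAddMonoidHom_apply, map_sum, Finset.sum_apply]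
  rfl

lemma gradDerivation_X (p : MvPolynomial σ R) (i : σ) : gradDerivation p (X i) = pderiv i p := by
  classical
  simp [gradDerivation_apply, pderiv_X, Pi.single_apply]

lemma gradDerivation_X_sq (p : MvPolynomial σ R) (i : σ) :
    gradDerivation p (X i ^ 2) = 2 * (X i * pderiv i p) := by
  rw [sq, Derivation.leibniz, gradDerivation_X, smul_eq_mul, two_mul]

lemma gradDerivation_gradDerivation_self (p : MvPolynomial σ R) :
    gradDerivation p (gradDerivation p p) =
      2 * ∑ i, ∑ j, pderiv i p * pderiv j p * pderiv j (pderiv i p) := by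
  rw [gradDerivation_apply p p, map_sum, Finset.mul_sum]
  refine Finset.sum_congr rfl fun i _ => ?_
  rw [Derivation.leibniz, gradDerivation_apply, smul_eq_mul, ← two_mul, Finset.mul_sum]
  simp only [mul_assoc]

end GradDerivation

lemma differentiable_eval {κ : Type*} [Fintype κ] (p : MvPolynomial κ ℝ) :
    Differentiable ℝ fun x : EuclideanSpace ℝ κ => eval x p := by
  induction p using MvPolynomial.induction_on with
  | C a => simp only [eval_C, differentiable_const]
  | add p q hp hq => simpa only [map_add] using hp.fun_add hq
  | mul_X p i hp =>
    simp only [map_mul, eval_X]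
    fun_prop

lemma pd_coord (x : EuclideanSpace ℝ ι) (i j : ι) :
    pd (fun y => y j) x i = (Pi.single i 1 : ι → ℝ) j :=
  DFunLike.congr_fun (EuclideanSpace.proj j : EuclideanSpace ℝ ι →L[ℝ] ℝ).fderiv
    (EuclideanSpace.single i 1)

lemma pd_fun_add {F G : EuclideanSpace ℝ ι → ℝ} {x : EuclideanSpace ℝ ι}
    (hF : DifferentiableAt ℝ F x) (hG : DifferentiableAt ℝ G x) (i : ι) :
    pd (fun y => F y + G y) x i = pd F x i + pd G x i := by
  simp only [pd, fderiv_fun_add hF hG, add_apply]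

lemma pd_fun_mul {F G : EuclideanSpace ℝ ι → ℝ} {x : EuclideanSpace ℝ ι}
    (hF : DifferentiableAt ℝ F x) (hG : DifferentiableAt ℝ G x) (i : ι) :
    pd (fun y => F y * G y) x i = F x * pd G x i + G x * pd F x i := by
  simp only [pd, fderiv_fun_mul hF hG, add_apply, smul_apply, smul_eq_mul]

lemma pd_eval (p : MvPolynomial ι ℝ) (x : EuclideanSpace ℝ ι) (i : ι) :
    pd (fun y => eval y p) x i = eval x (pderiv i p) := by
  induction p using MvPolynomial.induction_on with
  | C a => simp [pd]
  | add p q hp hq =>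
    simp only [map_add]
    rw [pd_fun_add (differentiable_eval p x) (differentiable_eval q x), hp, hq]
  | mul_X p j hp =>
    simp only [map_mul, eval_X]
    rw [pd_fun_mul (differentiable_eval p x) (by fun_prop), pd_coord, hp, Derivation.leibniz,
      pderiv_X]
    simp [Pi.single_apply, apply_ite]

lemma fderiv_pd_eval (p : MvPolynomial ι ℝ) (x : EuclideanSpace ℝ ι) (i j : ι) :
    fderiv ℝ (fun y => pd (fun w => eval w p) y i) x (EuclideanSpace.single j 1) =
      eval x (pderiv j (pderiv i p)) := by
  simp only [pd_eval]
  exact pd_eval (pderiv i p) x j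

lemma lap_eval (p : MvPolynomial ι ℝ) (x : EuclideanSpace ℝ ι) :
    lap (fun y => eval y p) x = eval x (∑ i, pderiv i (pderiv i p)) := by
  simp only [lap, fderiv_pd_eval, map_sum]

lemma two_mul_infLap_eval (p : MvPolynomial ι ℝ) (x : EuclideanSpace ℝ ι) :
    2 * infLap (fun y => eval y p) x = eval x (gradDerivation p (gradDerivation p p)) := by
  simp only [infLap, fderiv_pd_eval]
  simp only [pd_eval, gradDerivation_gradDerivation_self, map_mul, map_sum, map_ofNat]

lemma derivation_ofNat {R A M : Type*} [CommSemiring R] [CommSemiring A] [AddCommMonoid M]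
    [Algebra R A] [Module A M] [Module R M] (D : Derivation R A M) (n : ℕ) [n.AtLeastTwo] :
    D (ofNat(n) : A) = 0 :=
  D.map_natCast n

section LawsonCubic

variable (R : Type*) [CommRing R]

/-- Lawson's cubic `y₂ (x₁² - y₁²) - x₂ (2 x₁ y₁)`, with `X 0, X 1, X 2, X 3` standing for
`x₁, y₁, x₂, y₂`. -/
def lawsonCubic : MvPolynomial (Fin 4) R :=
  X 3 * (X 0 ^ 2 - X 1 ^ 2) - X 2 * (2 * X 0 * X 1)

lemma pderiv_lawsonCubic (i : Fin 4) :
    pderiv i (lawsonCubic R) =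
      ![2 * (X 0 * X 3 - X 1 * X 2), -2 * (X 1 * X 3 + X 0 * X 2), -2 * (X 0 * X 1),
        X 0 ^ 2 - X 1 ^ 2] i := by
  fin_cases i <;> simp [lawsonCubic, pderiv_X, derivation_ofNat] <;> ring

lemma sum_pderiv_pderiv_lawsonCubic : ∑ i, pderiv i (pderiv i (lawsonCubic R)) = 0 := by
  simp [Fin.sum_univ_four, pderiv_lawsonCubic, pderiv_X, derivation_ofNat]

lemma gradDerivation_lawsonCubic_self :
    gradDerivation (lawsonCubic R) (lawsonCubic R) =
      (X 0 ^ 2 + X 1 ^ 2) * ((X 0 ^ 2 + X 1 ^ 2) + 4 * (X 2 ^ 2 + X 3 ^ 2)) := by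
  simp only [gradDerivation_apply, Fin.sum_univ_four, pderiv_lawsonCubic, Matrix.cons_val]
  ring

lemma gradDerivation_lawsonCubic_X_zero_sq_add_X_one_sq :
    gradDerivation (lawsonCubic R) (X 0 ^ 2 + X 1 ^ 2) = 4 * lawsonCubic R := by
  simp only [map_add, gradDerivation_X_sq, pderiv_lawsonCubic, Matrix.cons_val]
  rw [lawsonCubic]
  ring

lemma gradDerivation_lawsonCubic_X_two_sq_add_X_three_sq :
    gradDerivation (lawsonCubic R) (X 2 ^ 2 + X 3 ^ 2) = 2 * lawsonCubic R := by
  simp only [map_add, gradDerivation_X_sq, pderiv_lawsonCubic, Matrix.cons_val]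
  rw [lawsonCubic]
  ring

lemma gradDerivation_gradDerivation_lawsonCubic :
    gradDerivation (lawsonCubic R) (gradDerivation (lawsonCubic R) (lawsonCubic R)) =
      16 * (X 0 ^ 2 + X 1 ^ 2 + X 2 ^ 2 + X 3 ^ 2) * lawsonCubic R := by
  rw [gradDerivation_lawsonCubic_self, Derivation.leibniz, map_add, Derivation.leibniz _ 4,
    gradDerivation_lawsonCubic_X_zero_sq_add_X_one_sq,
    gradDerivation_lawsonCubic_X_two_sq_add_X_three_sq, derivation_ofNat]
  simp only [smul_eq_mul]
  ring

end LawsonCubic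

lemma lap_lawsonCubic (x : EuclideanSpace ℝ (Fin 4)) :
    lap (fun y => eval y (lawsonCubic ℝ)) x = 0 := by
  rw [lap_eval, sum_pderiv_pderiv_lawsonCubic, map_zero]

lemma infLap_lawsonCubic (x : EuclideanSpace ℝ (Fin 4)) :
    infLap (fun y => eval y (lawsonCubic ℝ)) x = 8 * ‖x‖ ^ 2 * eval x (lawsonCubic ℝ) := by
  have h := two_mul_infLap_eval (lawsonCubic ℝ) x
  simp only [gradDerivation_gradDerivation_lawsonCubic, map_mul, map_add, map_pow, map_ofNat,
    eval_X] at h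
  rw [EuclideanSpace.real_norm_sq_eq, Fin.sum_univ_four]
  linarith

/-- Lawson's minimal cubic cone: with coordinates
`(x₁,y₁,x₂,y₂) = (z 0, z 1, z 2, z 3)` on `ℝ⁴`, the cubic
`P = y₂·(x₁² − y₁²) − x₂·(2x₁y₁)` satisfies `‖∇P‖²·ΔP − Δ_∞P = 0` at every point of
`{P = 0}` with `∇P ≠ 0`; hence `{P = 0}` is a minimal cubic cone in `ℝ⁴`. -/
theorem lawson_cubic_cone_minimal (z : EuclideanSpace ℝ (Fin 4))
    (hz : z 3 * ((z 0) ^ 2 - (z 1) ^ 2) - z 2 * (2 * z 0 * z 1) = 0)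
    (hgrad : ∃ i, pd (fun w : EuclideanSpace ℝ (Fin 4) =>
      w 3 * ((w 0) ^ 2 - (w 1) ^ 2) - w 2 * (2 * w 0 * w 1)) z i ≠ 0) :
    gradSq (fun w : EuclideanSpace ℝ (Fin 4) =>
        w 3 * ((w 0) ^ 2 - (w 1) ^ 2) - w 2 * (2 * w 0 * w 1)) z *
      lap (fun w : EuclideanSpace ℝ (Fin 4) =>
        w 3 * ((w 0) ^ 2 - (w 1) ^ 2) - w 2 * (2 * w 0 * w 1)) z -
      infLap (fun w : EuclideanSpace ℝ (Fin 4) =>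
        w 3 * ((w 0) ^ 2 - (w 1) ^ 2) - w 2 * (2 * w 0 * w 1)) z = 0 := by
  have eval_eq (w : EuclideanSpace ℝ (Fin 4)) : eval w (lawsonCubic ℝ) =
      w 3 * ((w 0) ^ 2 - (w 1) ^ 2) - w 2 * (2 * w 0 * w 1) := by
    simp [lawsonCubic]
  simp only [← eval_eq] at hz ⊢
  rw [lap_lawsonCubic, infLap_lawsonCubic, hz, mul_zero, mul_zero, sub_zero]
end
end
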